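/- arXiv:math/0007120 — 8 statements merged into one kernel-verified Lean document; each statement's English description precedes it below -/
import Mathlib

section
/- Let τ : [0,1] → ℝ be continuous and define its straightening τ' as in the context. Then: (i) τ'(0) = τ(0) and τ'(1) = τ(1); (ii) τ'(t) ∈ J(τ) for every t ∈ [0,1]; (iii) τ' is monotone nondecreasing if τ(0) ≤ τ(1) and monotone nonincreasing if τ(1) ≤ τ(0); and (iv) τ' is continuous. -/
/-- The retraction of `ℝ` onto the closed interval with endpoints `a` and `b`,
sending points above the interval to its maximum and points below to its minimum. -/
noncomputable def intervalRetract (a b x : ℝ) : ℝ := max (min a b) (min x (max a b))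

/-- The 1-dimensional straightening operator: `straighten τ t` is the infimum of values `s`
attained by `φ ∘ τ` (where `φ` is the retraction onto the interval `J(τ)` with endpoints
`τ 0` and `τ 1`) simultaneously at some `t₁ ≤ t` and some `t₂ ≥ t`. -/
noncomputable def straighten (τ : unitInterval → ℝ) : unitInterval → ℝ := fun t =>
  sInf {s : ℝ | ∃ t₁ t₂ : unitInterval, t₁ ≤ t ∧ t ≤ t₂ ∧
    intervalRetract (τ 0) (τ 1) (τ t₁) = s ∧ intervalRetract (τ 0) (τ 1) (τ t₂) = s}

theorem aux_mono (f : unitInterval → ℝ) (hf : Continuous f) (h0 : ∀ x, f 0 ≤ f x)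
    (h1 : ∀ x, f x ≤ f 1) :
    ∃ v : unitInterval → ℝ, Continuous v ∧ Monotone v ∧ v 0 = f 0 ∧ v 1 = f 1 ∧
      ∀ t, sInf {s : ℝ | ∃ t₁ t₂ : unitInterval, t₁ ≤ t ∧ t ≤ t₂ ∧ f t₁ = s ∧ f t₂ = s} = v t := by
  have hc : Continuous (fun t => sInf ((fun s => f (max t s)) '' (Set.univ : Set unitInterval))) := by
    apply IsCompact.continuous_sInf isCompact_univ (f := fun t s => f (max t s))
    exact hf.comp (continuous_fst.max continuous_snd)
  have key : ∀ t, ∃ p, t ≤ p ∧ sInf ((fun s => f (max t s)) '' (Set.univ : Set unitInterval)) = f p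
      ∧ ∀ q, t ≤ q → f p ≤ f q := by
    intro t
    obtain ⟨s, -, hs⟩ := isCompact_univ.exists_isMinOn (f := fun s => f (max t s))
      Set.univ_nonempty (hf.comp (continuous_const.max continuous_id)).continuousOn
    refine ⟨max t s, le_max_left _ _, ?_, ?_⟩
    · apply IsLeast.csInf_eq
      refine ⟨⟨s, trivial, rfl⟩, ?_⟩
      rintro _ ⟨q, -, rfl⟩
      exact hs (Set.mem_univ q)
    · intro q hq
      have := hs (Set.mem_univ q)
      simpa [hq] using this
  refine ⟨_, hc, ?_, ?_, ?_, ?_⟩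
  · intro x y hxy
    obtain ⟨p, hp, e, m⟩ := key x
    obtain ⟨p', hp', e', m'⟩ := key y
    simp only [e, e']
    exact m _ (hxy.trans hp')
  · obtain ⟨p, hp, e, m⟩ := key 0
    simp only [e]
    exact le_antisymm (m _ le_rfl) (h0 _)
  · obtain ⟨p, hp, e, m⟩ := key 1
    simp only [e]
    rw [le_antisymm unitInterval.le_one' hp]
  · intro t
    obtain ⟨p, hp, e, m⟩ := key t
    simp only [e]
    apply IsLeast.csInf_eq
    constructor
    · obtain ⟨c, hc, hc'⟩ := intermediate_value_Icc (unitInterval.nonneg' (t := t)) hf.continuousOn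
        ⟨h0 p, m t le_rfl⟩
      exact ⟨c, p, hc.2, hp, hc', rfl⟩
    · rintro _ ⟨a, b, ha, hb, -, rfl⟩
      exact m _ hb

theorem aux_anti (f : unitInterval → ℝ) (hf : Continuous f) (h0 : ∀ x, f x ≤ f 0)
    (h1 : ∀ x, f 1 ≤ f x) :
    ∃ v : unitInterval → ℝ, Continuous v ∧ Antitone v ∧ v 0 = f 0 ∧ v 1 = f 1 ∧
      ∀ t, sInf {s : ℝ | ∃ t₁ t₂ : unitInterval, t₁ ≤ t ∧ t ≤ t₂ ∧ f t₁ = s ∧ f t₂ = s} = v t := by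
  obtain ⟨v, hv, hm, a, b, h⟩ := aux_mono (fun x => f (unitInterval.symm x))
    (hf.comp unitInterval.continuous_symm) 
    (fun x => by simpa only [unitInterval.symm_zero] using h1 _)
    (fun x => by simpa only [unitInterval.symm_one] using h0 _)
  refine ⟨fun t => v (unitInterval.symm t), hv.comp unitInterval.continuous_symm, ?_, ?_, ?_, ?_⟩
  · intro x y hxy
    exact hm (unitInterval.symm_le_symm.2 hxy)
  · simpa using b
  · simpa using a
  · intro t
    refine Eq.trans ?_ (h (unitInterval.symm t))
    congr 1
    ext s
    constructor
    · rintro ⟨a, b, ha, hb, e, e'⟩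
      exact ⟨unitInterval.symm b, unitInterval.symm a, unitInterval.symm_le_symm.2 hb,
        unitInterval.symm_le_symm.2 ha, by simpa using e', by simpa using e⟩
    · rintro ⟨a, b, ha, hb, e, e'⟩
      refine ⟨unitInterval.symm b, unitInterval.symm a, ?_, ?_, e', e⟩
      · simpa using unitInterval.symm_le_symm.2 hb
      · simpa using unitInterval.symm_le_symm.2 ha

theorem straighten_props (τ : unitInterval → ℝ) (hτ : Continuous τ) :
    straighten τ 0 = τ 0 ∧ straighten τ 1 = τ 1 ∧
    (∀ t, straighten τ t ∈ Set.uIcc (τ 0) (τ 1)) ∧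
    (τ 0 ≤ τ 1 → Monotone (straighten τ)) ∧
    (τ 1 ≤ τ 0 → Antitone (straighten τ)) ∧
    Continuous (straighten τ) := by
  have hf : Continuous (fun t => intervalRetract (τ 0) (τ 1) (τ t)) := by
    unfold intervalRetract
    fun_prop
  have e0 : intervalRetract (τ 0) (τ 1) (τ 0) = τ 0 := by simp [intervalRetract]
  have e1 : intervalRetract (τ 0) (τ 1) (τ 1) = τ 1 := by simp [intervalRetract]
  have hl : ∀ x, min (τ 0) (τ 1) ≤ intervalRetract (τ 0) (τ 1) x := fun x => le_max_left _ _
  have hu : ∀ x, intervalRetract (τ 0) (τ 1) x ≤ max (τ 0) (τ 1) := fun x =>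
    max_le min_le_max (min_le_right _ _)
  rcases le_total (τ 0) (τ 1) with h | h
  · rw [min_eq_left h] at hl
    rw [max_eq_right h] at hu
    obtain ⟨v, hv, hm, a, b, hs⟩ := aux_mono _ hf (fun x => by rw [e0]; exact hl _)
      (fun x => by rw [e1]; exact hu _)
    have : straighten τ = v := funext hs
    rw [this]
    rw [e0] at a
    rw [e1] at b
    have hr : ∀ t, v t ∈ Set.uIcc (τ 0) (τ 1) := fun t => by
      rw [Set.uIcc_of_le h, ← a, ← b]
      exact ⟨hm unitInterval.nonneg', hm unitInterval.le_one'⟩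
    refine ⟨a, b, hr, fun _ => hm, fun h' => ?_, hv⟩
    intro x y _
    have hx := hr x
    have hy := hr y
    rw [le_antisymm h h', Set.uIcc_self] at hx hy
    rw [hx, hy]
  · rw [min_eq_right h] at hl
    rw [max_eq_left h] at hu
    obtain ⟨v, hv, hm, a, b, hs⟩ := aux_anti _ hf (fun x => by rw [e0]; exact hu _)
      (fun x => by rw [e1]; exact hl _)
    have : straighten τ = v := funext hs
    rw [this]
    rw [e0] at a
    rw [e1] at b
    have hr : ∀ t, v t ∈ Set.uIcc (τ 0) (τ 1) := fun t => by
      rw [Set.uIcc_of_ge h, ← a, ← b]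
      exact ⟨hm unitInterval.le_one', hm unitInterval.nonneg'⟩
    refine ⟨a, b, hr, fun h' => ?_, fun _ => hm, hv⟩
    intro x y _
    have hx := hr x
    have hy := hr y
    rw [le_antisymm h h', Set.uIcc_self] at hx hy
    rw [hx, hy]
end

section
/- The straightening operator is a projection onto monotone maps: if τ : [0,1] → ℝ is continuous and monotone (either nondecreasing or nonincreasing), then its straightening τ' is equal to τ. -/
theorem straighten_of_monotone (τ : unitInterval → ℝ) (hτ : Continuous τ)
    (hmono : Monotone τ ∨ Antitone τ) : straighten τ = τ := by
  have key : ∀ t, intervalRetract (τ 0) (τ 1) (τ t) = τ t := by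
    intro t
    have h0 : (0 : unitInterval) ≤ t := unitInterval.nonneg'
    have h1 : t ≤ (1 : unitInterval) := unitInterval.le_one'
    unfold intervalRetract
    rcases hmono with h | h
    · have a := h h0
      have b := h h1
      rw [min_eq_left (a.trans b), max_eq_right (a.trans b), min_eq_left b, max_eq_right a]
    · have a := h h0
      have b := h h1
      rw [min_eq_right (b.trans a), max_eq_left (b.trans a), min_eq_left a, max_eq_right b]
  funext t
  unfold straighten
  simp only [key]
  have hs : {s : ℝ | ∃ t₁ t₂ : unitInterval, t₁ ≤ t ∧ t ≤ t₂ ∧ τ t₁ = s ∧ τ t₂ = s} = {τ t} := by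
    ext s
    simp only [Set.mem_setOf_eq, Set.mem_singleton_iff]
    constructor
    · rintro ⟨t₁, t₂, h1, h2, e1, e2⟩
      rcases hmono with h | h
      · have a := h h1
        have b := h h2
        linarith
      · have a := h h1
        have b := h h2
        linarith
    · rintro rfl
      exact ⟨t, t, le_rfl, le_rfl, rfl, rfl⟩
  rw [hs, csInf_singleton]
end

section
/- The straightening operator uses only the order structure of ℝ and is hence equivariant under order-preserving homeomorphisms: if τ : [0,1] → ℝ is continuous and g : ℝ → ℝ is a strictly increasing homeomorphism, then the straightening of g ∘ τ equals g composed with the straightening of τ, i.e. (g ∘ τ)' = g ∘ τ'. -/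
theorem intervalRetract_map (g : ℝ → ℝ) (hg : Monotone g) (a b x : ℝ) :
    intervalRetract (g a) (g b) (g x) = g (intervalRetract a b x) := by
  simp only [intervalRetract, hg.map_max, hg.map_min]

theorem straighten_equivariant (τ : unitInterval → ℝ) (hτ : Continuous τ)
    (g : ℝ ≃ₜ ℝ) (hg : StrictMono g) :
    straighten (fun t => g (τ t)) = fun t => g (straighten τ t) := by
  funext t
  unfold straighten
  rw [Monotone.map_csInf_of_continuousAt g.continuous.continuousAt hg.monotone ?_ ?_]
  · congr 1
    ext s
    simp only [Set.mem_ofPred_eq, Set.mem_image, intervalRetract_map g hg.monotone]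
    constructor
    · rintro ⟨t₁, t₂, h₁, h₂, e₁, e₂⟩
      exact ⟨_, ⟨t₁, t₂, h₁, h₂, rfl, g.injective (e₂.trans e₁.symm)⟩, e₁⟩
    · rintro ⟨r, ⟨t₁, t₂, h₁, h₂, e₁, e₂⟩, rfl⟩
      exact ⟨t₁, t₂, h₁, h₂, by rw [e₁], by rw [e₂]⟩
  · exact ⟨_, t, t, le_rfl, le_rfl, rfl, rfl⟩
  · refine ⟨min (τ 0) (τ 1), ?_⟩
    rintro s ⟨t₁, t₂, h₁, h₂, rfl, e₂⟩
    exact le_max_left _ _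
end

section
/- The straightening operator τ ↦ τ' is a well-defined continuous self-map of C([0,1], ℝ): for every continuous τ the straightening τ' is again continuous, and the map from C([0,1], ℝ) to C([0,1], ℝ) sending τ to τ' is continuous with respect to the topology of uniform convergence (the compact–open topology). -/
lemma retract_left (a b : ℝ) : intervalRetract a b a = a := by
  unfold intervalRetract
  rcases le_total a b with h | h <;> simp [h]

lemma retract_right (a b : ℝ) : intervalRetract a b b = b := by
  unfold intervalRetract
  rcases le_total a b with h | h <;> simp [h]

lemma retract_ge (a b x : ℝ) : min a b ≤ intervalRetract a b x := le_max_left _ _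

lemma straighten_aux (σ : unitInterval → ℝ) (hσ : Continuous σ)
    (hlow : ∀ t, min (σ 0) (σ 1) ≤ σ t) (t : unitInterval) :
    sInf {s : ℝ | ∃ t₁ t₂ : unitInterval, t₁ ≤ t ∧ t ≤ t₂ ∧ σ t₁ = s ∧ σ t₂ = s} =
    max (sInf ((fun u => σ (min u t)) '' Set.univ)) (sInf ((fun u => σ (max u t)) '' Set.univ)) := by
  have c1 : Continuous (fun u => σ (min u t)) := by fun_prop
  have c2 : Continuous (fun u => σ (max u t)) := by fun_prop
  obtain ⟨p, -, hp, hp'⟩ := isCompact_univ.exists_sInf_image_eq_and_le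
    (Set.univ_nonempty (α := unitInterval)) c1.continuousOn
  obtain ⟨q, -, hq, hq'⟩ := isCompact_univ.exists_sInf_image_eq_and_le
    (Set.univ_nonempty (α := unitInterval)) c2.continuousOn
  rw [hp, hq]
  have h0 : (0 : unitInterval) ≤ t := unitInterval.nonneg'
  have h1 : t ≤ 1 := unitInterval.le_one'
  have p0 := hp' 0 trivial
  have p1 := hp' 1 trivial
  have q0 := hq' 0 trivial
  have q1 := hq' 1 trivial
  simp only [min_eq_left h0, min_eq_right h1, max_eq_right h0, max_eq_left h1] at p0 p1 q0 q1
  have lp := hlow (min p t)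
  have lq := hlow (max q t)
  rcases le_total (σ 0) (σ 1) with h | h
  · rw [min_eq_left h] at lp lq
    rw [max_eq_right (p0.trans lq)]
    refine IsLeast.csInf_eq ⟨?_, ?_⟩
    · have := intermediate_value_univ (0 : unitInterval) 1 c1
      simp only [min_eq_left h0, min_eq_right h1] at this
      obtain ⟨u, hu⟩ := this ⟨lq, q0⟩
      exact ⟨min u t, max q t, min_le_right _ _, le_max_right _ _, hu, rfl⟩
    · rintro s ⟨t₁, t₂, h₁, h₂, e₁, e₂⟩
      have := hq' t₂ trivial
      simp only [max_eq_left h₂] at this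
      exact this.trans e₂.le
  · rw [min_eq_right h] at lp lq
    rw [max_eq_left (q1.trans lp)]
    refine IsLeast.csInf_eq ⟨?_, ?_⟩
    · have := intermediate_value_univ (1 : unitInterval) 0 c2
      simp only [max_eq_right h0, max_eq_left h1] at this
      obtain ⟨u, hu⟩ := this ⟨lp, p1⟩
      exact ⟨min p t, max u t, min_le_right _ _, le_max_right _ _, rfl, hu⟩
    · rintro s ⟨t₁, t₂, h₁, h₂, e₁, e₂⟩
      have := hp' t₁ trivial
      simp only [min_eq_left h₁] at this
      exact this.trans e₁.le

theorem straighten_continuous_operator :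
    ∃ S : C(unitInterval, ℝ) → C(unitInterval, ℝ),
      Continuous S ∧
      ∀ (τ : C(unitInterval, ℝ)) (t : unitInterval), S τ t = straighten (⇑τ) t := by
  let F : C(unitInterval, ℝ) × unitInterval → ℝ := fun x =>
    max (sInf ((fun u => intervalRetract (x.1 0) (x.1 1) (x.1 (min u x.2))) '' Set.univ))
      (sInf ((fun u => intervalRetract (x.1 0) (x.1 1) (x.1 (max u x.2))) '' Set.univ))
  have hF : Continuous F := by
    refine Continuous.max ?_ ?_
    · refine IsCompact.continuous_sInf
        (f := fun (x : C(unitInterval, ℝ) × unitInterval) (u : unitInterval) =>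
          intervalRetract (x.1 0) (x.1 1) (x.1 (min u x.2))) isCompact_univ ?_
      simp only [Function.HasUncurry.uncurry, intervalRetract, id]
      fun_prop
    · refine IsCompact.continuous_sInf
        (f := fun (x : C(unitInterval, ℝ) × unitInterval) (u : unitInterval) =>
          intervalRetract (x.1 0) (x.1 1) (x.1 (max u x.2))) isCompact_univ ?_
      simp only [Function.HasUncurry.uncurry, intervalRetract, id]
      fun_prop
  refine ⟨ContinuousMap.curry ⟨F, hF⟩, ContinuousMap.continuous _, fun τ t => ?_⟩
  have key := straighten_aux (fun t => intervalRetract (τ 0) (τ 1) (τ t))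
    (by unfold intervalRetract; fun_prop)
    (fun t => by simp only [retract_left, retract_right]; exact retract_ge _ _ _) t
  exact key.symm
end

section
/- Let v₀, v₁, v₂ ∈ ℝ² be affinely independent, let T be the convex hull of {v₀, v₁, v₂}, and let ∂T denote the frontier of T. Let τ : ∂T → ℝ be continuous with τ(v₀) < τ(v₁) < τ(v₂), and suppose τ is strictly monotone along each edge of T, i.e. for each pair i < j the function t ↦ τ((1−t)·vᵢ + t·vⱼ) is strictly monotone on [0,1]. Then for every point p ∈ T there exists a unique t ∈ [τ(v₀), τ(v₂)] such that p lies in the convex hull of the level set { x ∈ ∂T : τ(x) = t }. -/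
def LowR (f g : ℝ → ℝ) (p1 p2 t : ℝ) : Prop :=
  ∃ s ∈ Set.Icc (0:ℝ) 1, ∃ u ∈ Set.Icc (0:ℝ) 1, ∃ l ∈ Set.Icc (0:ℝ) 1,
    f s = t ∧ g u = t ∧ p1 = l * u ∧ p2 = (1 - l) * s

lemma inv_exists (f : ℝ → ℝ) (hc : ContinuousOn f (Set.Icc 0 1))
    (hm : StrictMonoOn f (Set.Icc 0 1)) :
    ∃ g : ℝ → ℝ, ContinuousOn g (Set.Icc (f 0) (f 1)) ∧
      ∀ t ∈ Set.Icc (f 0) (f 1), g t ∈ Set.Icc (0:ℝ) 1 ∧ f (g t) = t := by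
  have himg : f '' Set.Icc 0 1 = Set.Icc (f 0) (f 1) := by
    apply Set.Subset.antisymm
    · rintro _ ⟨x, hx, rfl⟩
      exact ⟨hm.monotoneOn ⟨le_rfl, zero_le_one⟩ hx hx.1,
        hm.monotoneOn hx ⟨zero_le_one, le_rfl⟩ hx.2⟩
    · exact intermediate_value_Icc zero_le_one hc
  let e := hm.orderIso f (Set.Icc 0 1)
  have hoc : Set.OrdConnected (f '' Set.Icc 0 1) := by rw [himg]; exact Set.ordConnected_Icc
  have hcont : Continuous e.symm := OrderIso.continuous _
  classical
  refine ⟨fun t => if h : t ∈ f '' Set.Icc 0 1 then (e.symm ⟨t, h⟩ : ℝ) else 0, ?_, ?_⟩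
  · rw [← himg, continuousOn_iff_continuous_domRestrict]
    have : Set.domRestrict (f '' Set.Icc 0 1)
        (fun t => if h : t ∈ f '' Set.Icc 0 1 then (e.symm ⟨t, h⟩ : ℝ) else 0)
        = fun x => (e.symm x : ℝ) := by
      funext x
      simp only [Set.domRestrict_apply]
      rw [dif_pos x.2]
    rw [this]
    exact continuous_subtype_val.comp hcont
  · intro t ht
    rw [← himg] at ht
    simp only [dif_pos ht]
    refine ⟨(e.symm ⟨t, ht⟩).2, ?_⟩
    have := congrArg Subtype.val (e.apply_symm_apply ⟨t, ht⟩)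
    exact this

section real
variable {f g : ℝ → ℝ} {p1 p2 α : ℝ}

lemma low_unique (hf : StrictMonoOn f (Set.Icc 0 1)) (hg : StrictMonoOn g (Set.Icc 0 1))
    {t t' : ℝ} (h : LowR f g p1 p2 t) (h' : LowR f g p1 p2 t') : ¬ t < t' := by
  intro hlt
  obtain ⟨s, hs, u, hu, l, hl, e1, e2, e3, e4⟩ := h
  obtain ⟨s', hs', u', hu', l', hl', e1', e2', e3', e4'⟩ := h'
  have hss : s < s' := (hf.lt_iff_lt hs hs').1 (by rw [e1, e1']; exact hlt)
  have huu : u < u' := (hg.lt_iff_lt hu hu').1 (by rw [e2, e2']; exact hlt)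
  obtain ⟨hs0, hs1⟩ := hs
  obtain ⟨hu0, hu1⟩ := hu
  obtain ⟨hl0, hl1⟩ := hl
  obtain ⟨hl0', hl1'⟩ := hl'
  have A : l * u = l' * u' := by rw [← e3, e3']
  have B : (1 - l) * s = (1 - l') * s' := by rw [← e4, e4']
  have h1 : l' ≤ l := by
    by_contra hc
    push Not at hc
    nlinarith [mul_nonneg hl0 (sub_nonneg.2 huu.le), mul_pos (sub_pos.2 hc) (hu0.trans_lt huu)]
  have h2 : l ≤ l' := by
    by_contra hc
    push Not at hc
    nlinarith [mul_nonneg (sub_nonneg.2 hl1) (sub_nonneg.2 hss.le),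
      mul_pos (sub_pos.2 hc) (hs0.trans_lt hss)]
  have h3 : l = l' := le_antisymm h2 h1
  subst h3
  have : l = 0 := by
    by_contra hne
    exact huu.ne (mul_left_cancel₀ hne A)
  subst this
  linarith

lemma low_bound (hf : StrictMonoOn f (Set.Icc 0 1)) (hg : StrictMonoOn g (Set.Icc 0 1))
    (hα : α ∈ Set.Ioc (0:ℝ) 1) (hfa : f α = g 1)
    {t : ℝ} (h : LowR f g p1 p2 t) :
    p2 ≤ α * (1 - p1) ∧ (p2 = α * (1 - p1) → t = g 1) := by
  obtain ⟨s, hs, u, hu, l, hl, e1, e2, e3, e4⟩ := h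
  have hsa : s ≤ α := by
    rw [← hf.le_iff_le hs ⟨hα.1.le, hα.2⟩, e1, hfa, ← e2]
    exact hg.monotoneOn hu ⟨zero_le_one, le_rfl⟩ hu.2
  have k1 : 0 ≤ (1 - l) * (α - s) := mul_nonneg (sub_nonneg.2 hl.2) (sub_nonneg.2 hsa)
  have k2 : 0 ≤ α * (l * (1 - u)) :=
    mul_nonneg hα.1.le (mul_nonneg hl.1 (sub_nonneg.2 hu.2))
  constructor
  · rw [e3, e4]; nlinarith
  · intro he
    rw [e3, e4] at he
    have z1 : (1 - l) * (α - s) = 0 := by nlinarith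
    have z2 : α * (l * (1 - u)) = 0 := by nlinarith
    rcases mul_eq_zero.1 z2 with z | z
    · exact absurd z hα.1.ne'
    rcases mul_eq_zero.1 z with z | z
    · subst z
      have : s = α := by linarith
      rw [← e1, this, hfa]
    · have : u = 1 := by linarith
      rw [← e2, this]

lemma low_exists (hfc : ContinuousOn f (Set.Icc 0 1)) (hgc : ContinuousOn g (Set.Icc 0 1))
    (hf : StrictMonoOn f (Set.Icc 0 1)) (hg : StrictMonoOn g (Set.Icc 0 1))
    (h0 : f 0 = g 0) (hα : α ∈ Set.Ioc (0:ℝ) 1) (hfa : f α = g 1)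
    (hp1 : 0 ≤ p1) (hp2 : 0 ≤ p2) (hp : p1 + p2 ≤ 1) (hle : p2 ≤ α * (1 - p1)) :
    ∃ t ∈ Set.Icc (g 0) (g 1), LowR f g p1 p2 t := by
  obtain ⟨k, hkc, hk⟩ := inv_exists g hgc hg
  have m0 : (0:ℝ) ∈ Set.Icc (0:ℝ) 1 := ⟨le_rfl, zero_le_one⟩
  have m1 : (1:ℝ) ∈ Set.Icc (0:ℝ) 1 := ⟨zero_le_one, le_rfl⟩
  have mα : α ∈ Set.Icc (0:ℝ) 1 := ⟨hα.1.le, hα.2⟩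
  have hsub : Set.Icc 0 α ⊆ Set.Icc (0:ℝ) 1 := Set.Icc_subset_Icc le_rfl hα.2
  have hmaps : Set.MapsTo f (Set.Icc 0 α) (Set.Icc (g 0) (g 1)) := by
    intro s hs
    rw [← h0, ← hfa]
    exact ⟨hf.monotoneOn m0 (hsub hs) hs.1, hf.monotoneOn (hsub hs) mα hs.2⟩
  set u : ℝ → ℝ := fun s => k (f s) with hu
  have huc : ContinuousOn u (Set.Icc 0 α) := hkc.comp (hfc.mono hsub) hmaps
  have hum : ∀ s ∈ Set.Icc 0 α, u s ∈ Set.Icc (0:ℝ) 1 ∧ g (u s) = f s :=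
    fun s hs => hk _ (hmaps hs)
  have a0 : (0:ℝ) ∈ Set.Icc 0 α := ⟨le_rfl, hα.1.le⟩
  have aα : α ∈ Set.Icc 0 α := ⟨hα.1.le, le_rfl⟩
  have u0 : u 0 = 0 := hg.injOn (hum 0 a0).1 m0 (by rw [(hum 0 a0).2, h0])
  have u1 : u α = 1 := hg.injOn (hum α aα).1 m1 (by rw [(hum α aα).2, hfa])
  have upos : ∀ s ∈ Set.Icc 0 α, 0 < s → 0 < u s := by
    intro s hs hpos
    rcases (hum s hs).1.1.lt_or_eq with h | h
    · exact h
    · exfalso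
      have := (hum s hs).2
      rw [← h, ← h0] at this
      exact hpos.ne (hf.injOn m0 (hsub hs) this)
  -- it suffices to find a root
  have fin : ∀ s ∈ Set.Icc 0 α, ∀ l ∈ Set.Icc (0:ℝ) 1, p1 = l * u s → p2 = (1 - l) * s →
      ∃ t ∈ Set.Icc (g 0) (g 1), LowR f g p1 p2 t := by
    intro s hs l hl q1 q2
    exact ⟨f s, hmaps hs, s, hsub hs, u s, (hum s hs).1, l, hl, rfl, (hum s hs).2, q1, q2⟩
  rcases hp2.eq_or_lt with z2 | z2
  · -- p2 = 0
    obtain ⟨s, hs, hsu⟩ : p1 ∈ u '' Set.Icc 0 α :=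
      intermediate_value_Icc hα.1.le huc (by rw [u0, u1]; exact ⟨hp1, by linarith⟩)
    exact fin s hs 1 m1 (by rw [hsu, one_mul]) (by rw [← z2]; ring)
  · have hpα : p2 ≤ α := hle.trans (by nlinarith [hα.1])
    have hsub2 : Set.Icc p2 α ⊆ Set.Icc 0 α := Set.Icc_subset_Icc hp2 le_rfl
    have hGc : ContinuousOn (fun s => p2 * u s + p1 * s - s * u s) (Set.Icc p2 α) := by
      have := huc.mono hsub2
      fun_prop
    obtain ⟨s, hs, hsG⟩ : (0:ℝ) ∈ (fun s => p2 * u s + p1 * s - s * u s) '' Set.Icc p2 α := by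
      apply intermediate_value_Icc' hpα hGc
      constructor
      · simp only [u1]; linarith
      · nlinarith [mul_nonneg hp1 hp2]
    simp only at hsG
    have spos : 0 < s := z2.trans_le hs.1
    have up := upos s (hsub2 hs) spos
    refine fin s (hsub2 hs) (p1 / u s) ⟨by positivity, ?_⟩ ?_ ?_
    · rw [div_le_one up]
      by_contra hc
      push Not at hc
      nlinarith [mul_pos (sub_pos.2 hc) spos, mul_pos z2 up]
    · field_simp
    · field_simp
      linarith
end real

section vec
variable {V : Type*} [AddCommGroup V] [Module ℝ V]

lemma hull_iff_low (v0 v1 v2 : V) (τ : V → ℝ) (F : Set V)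
    (hF : ∀ x, x ∈ F ↔ ∃ s ∈ Set.Icc (0:ℝ) 1, x = (1 - s) • v0 + s • v2 ∨
      x = (1 - s) • v0 + s • v1 ∨ x = (1 - s) • v1 + s • v2)
    (hu : ∀ a b c d : ℝ, a • (v1 - v0) + b • (v2 - v0) = c • (v1 - v0) + d • (v2 - v0) →
      a = c ∧ b = d)
    (hfc : ContinuousOn (fun t : ℝ => τ ((1 - t) • v0 + t • v2)) (Set.Icc 0 1))
    (hgc : ContinuousOn (fun t : ℝ => τ ((1 - t) • v0 + t • v1)) (Set.Icc 0 1))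
    (hf : StrictMonoOn (fun t : ℝ => τ ((1 - t) • v0 + t • v2)) (Set.Icc 0 1))
    (hg : StrictMonoOn (fun t : ℝ => τ ((1 - t) • v0 + t • v1)) (Set.Icc 0 1))
    (hh : StrictMonoOn (fun t : ℝ => τ ((1 - t) • v1 + t • v2)) (Set.Icc 0 1))
    (h12 : τ v1 ≤ τ v2)
    (p0 p1 p2 : ℝ) (hp : p0 + p1 + p2 = 1) (t : ℝ) (ht : t ∈ Set.Icc (τ v0) (τ v1)) :
    p0 • v0 + p1 • v1 + p2 • v2 ∈ convexHull ℝ {x | x ∈ F ∧ τ x = t} ↔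
    LowR (fun t : ℝ => τ ((1 - t) • v0 + t • v2)) (fun t : ℝ => τ ((1 - t) • v0 + t • v1))
      p1 p2 t := by
  have m0 : (0:ℝ) ∈ Set.Icc (0:ℝ) 1 := ⟨le_rfl, zero_le_one⟩
  have m1 : (1:ℝ) ∈ Set.Icc (0:ℝ) 1 := ⟨zero_le_one, le_rfl⟩
  have hp0 : p0 = 1 - p1 - p2 := by linarith
  constructor
  · intro hmem
    obtain ⟨s, hs, hst⟩ : t ∈ (fun t : ℝ => τ ((1 - t) • v0 + t • v2)) '' Set.Icc 0 1 :=
      intermediate_value_Icc zero_le_one hfc (by simpa using ⟨ht.1, ht.2.trans h12⟩)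
    obtain ⟨u, hu', hut⟩ : t ∈ (fun t : ℝ => τ ((1 - t) • v0 + t • v1)) '' Set.Icc 0 1 :=
      intermediate_value_Icc zero_le_one hgc (by simpa using ht)
    have hsub : {x | x ∈ F ∧ τ x = t} ⊆ {(1 - s) • v0 + s • v2, (1 - u) • v0 + u • v1} := by
      rintro x ⟨hx, hxt⟩
      obtain ⟨r, hr, rfl | rfl | rfl⟩ := (hF x).1 hx
      · left
        rw [hf.injOn hr hs (by simp only [hxt]; exact hst.symm)]
      · right
        rw [hg.injOn hr hu' (by simp only [hxt]; exact hut.symm)]; rfl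
      · right
        have hr0 : r = 0 := by
          apply le_antisymm _ hr.1
          rw [← hh.le_iff_le hr m0]
          simpa [hxt] using ht.2
        subst hr0
        have hu1 : u = 1 := by
          apply hg.injOn hu' m1
          rw [hut, ← hxt]; simp
        subst hu1
        simp
    have hmem' := convexHull_mono hsub hmem
    rw [convexHull_pair, segment_eq_image] at hmem'
    obtain ⟨l, hl, hle⟩ := hmem'
    refine ⟨s, hs, u, hu', l, hl, hst, hut, ?_⟩
    refine hu p1 p2 _ _ ?_
    rw [hp0] at hle
    have : ((1 - p1 - p2) • v0 + p1 • v1 + p2 • v2) - v0 =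
      ((1 - l) • ((1 - s) • v0 + s • v2) + l • ((1 - u) • v0 + u • v1)) - v0 := by rw [← hle]
    have e1 : ((1 - p1 - p2) • v0 + p1 • v1 + p2 • v2) - v0
      = p1 • (v1 - v0) + p2 • (v2 - v0) := by module
    rw [e1] at this
    rw [this]
    module
  · rintro ⟨s, hs, u, hu', l, hl, hst, hut, e1, e2⟩
    have hA : (1 - s) • v0 + s • v2 ∈ {x | x ∈ F ∧ τ x = t} :=
      ⟨(hF _).2 ⟨s, hs, Or.inl rfl⟩, hst⟩
    have hB : (1 - u) • v0 + u • v1 ∈ {x | x ∈ F ∧ τ x = t} :=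
      ⟨(hF _).2 ⟨u, hu', Or.inr (Or.inl rfl)⟩, hut⟩
    have := (convex_convexHull ℝ {x | x ∈ F ∧ τ x = t}) (subset_convexHull ℝ _ hA)
      (subset_convexHull ℝ _ hB) (sub_nonneg.2 hl.2) hl.1 (by ring)
    convert this using 1
    rw [hp0, e1, e2]
    module
end vec

lemma mono_of (f : ℝ → ℝ) (h : f 0 < f 1)
    (hm : StrictMonoOn f (Set.Icc 0 1) ∨ StrictAntiOn f (Set.Icc 0 1)) :
    StrictMonoOn f (Set.Icc 0 1) := by
  rcases hm with hm | hm
  · exact hm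
  · exact absurd (hm ⟨le_rfl, zero_le_one⟩ ⟨zero_le_one, le_rfl⟩ zero_lt_one) h.not_gt

lemma rev_mono (τ : EuclideanSpace ℝ (Fin 2) → ℝ) (x y : EuclideanSpace ℝ (Fin 2))
    (hm : StrictMonoOn (fun t : ℝ => τ ((1 - t) • x + t • y)) (Set.Icc 0 1)) :
    StrictMonoOn (fun t : ℝ => -τ ((1 - t) • y + t • x)) (Set.Icc 0 1) := by
  intro a ha b hb hab
  have := hm (a := 1 - b) ⟨by linarith [hb.2], by linarith [hb.1]⟩
    (b := 1 - a) ⟨by linarith [ha.2], by linarith [ha.1]⟩ (by linarith)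
  simp only [sub_sub_cancel] at this
  simp only
  rw [add_comm ((1 - a) • y), add_comm ((1 - b) • y)]
  linarith

lemma frontier_tri (v : Fin 3 → EuclideanSpace ℝ (Fin 2)) (hv : AffineIndependent ℝ v)
    (T : Set (EuclideanSpace ℝ (Fin 2))) (hT : T = convexHull ℝ {v 0, v 1, v 2}) (x) :
    x ∈ frontier T ↔ ∃ s ∈ Set.Icc (0:ℝ) 1, x = (1 - s) • v 0 + s • v 2 ∨
      x = (1 - s) • v 0 + s • v 1 ∨ x = (1 - s) • v 1 + s • v 2 := by
  have hr : Set.range v = {v 0, v 1, v 2} := by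
    ext y; simp [Fin.exists_fin_succ, eq_comm]
  have htop : affineSpan ℝ (Set.range v) = ⊤ := by
    rw [hv.affineSpan_eq_top_iff_card_eq_finrank_add_one]
    simp
  let b : AffineBasis (Fin 3) ℝ (EuclideanSpace ℝ (Fin 2)) := ⟨v, hv, htop⟩
  have hb : ∀ i, b i = v i := fun i => rfl
  have hrb : Set.range b = {v 0, v 1, v 2} := hr
  have hint : interior T = {x | ∀ i, 0 < b.coord i x} := by
    rw [hT, ← hrb, b.interior_convexHull]
  have hset : T = {x | ∀ i, 0 ≤ b.coord i x} := by
    rw [hT, ← hrb, b.convexHull_eq_nonneg_coord]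
  have hcl : IsClosed T := by
    rw [hT, ← hr]
    exact ((Set.finite_range v).isCompact_convexHull ℝ).isClosed
  rw [hcl.frontier_eq, hint, hset]
  have hsum := b.sum_coord_apply_eq_one x
  have hlin := b.linear_combination_coord_eq_self x
  rw [Fin.sum_univ_three] at hsum hlin
  simp only [hb] at hlin
  have hco : ∀ (i j k : Fin 3) (s : ℝ), b.coord k ((1 - s) • v i + s • v j) =
      (1 - s) * (if k = i then 1 else 0) + s * (if k = j then 1 else 0) := by
    intro i j k s
    have h1 : (1 - s) • v i + s • v j = AffineMap.lineMap (v i) (v j) s := by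
      rw [AffineMap.lineMap_apply_module]
    rw [h1, AffineMap.apply_lineMap, AffineMap.lineMap_apply_module, ← hb, ← hb,
      b.coord_apply, b.coord_apply]
    simp
  constructor
  · rintro ⟨hx, hn⟩
    simp only [Set.mem_ofPred_eq] at hx hn
    push Not at hn
    obtain ⟨i, hi⟩ := hn
    have hi0 := le_antisymm hi (hx i)
    have n0 := hx 0
    have n1 := hx 1
    have n2 := hx 2
    fin_cases i
    · simp only [Fin.zero_eta] at hi0
      refine ⟨b.coord 2 x, ⟨n2, by linarith⟩, Or.inr (Or.inr ?_)⟩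
      rw [show 1 - b.coord 2 x = b.coord 1 x by linarith]
      nth_rw 1 [← hlin]
      rw [hi0]; simp
    · simp only [Fin.mk_one] at hi0
      refine ⟨b.coord 2 x, ⟨n2, by linarith⟩, Or.inl ?_⟩
      rw [show 1 - b.coord 2 x = b.coord 0 x by linarith]
      nth_rw 1 [← hlin]
      rw [hi0]; simp
    · simp only [Fin.reduceFinMk] at hi0
      refine ⟨b.coord 1 x, ⟨n1, by linarith⟩, Or.inr (Or.inl ?_)⟩
      rw [show 1 - b.coord 1 x = b.coord 0 x by linarith]
      nth_rw 1 [← hlin]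
      rw [hi0]; simp
  · rintro ⟨s, hs, rfl | rfl | rfl⟩
    all_goals
      constructor
      · intro k
        rw [hco]
        have := hs.1
        have := sub_nonneg.2 hs.2
        positivity
    · intro h; have := h 1; rw [hco] at this; simp at this
    · intro h; have := h 2; rw [hco] at this; simp at this
    · intro h; have := h 0; rw [hco] at this; simp at this

lemma coords_unique (v : Fin 3 → EuclideanSpace ℝ (Fin 2)) (hv : AffineIndependent ℝ v)
    (a b c d : ℝ) (h : a • (v 1 - v 0) + b • (v 2 - v 0) = c • (v 1 - v 0) + d • (v 2 - v 0)) :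
    a = c ∧ b = d := by
  rw [affineIndependent_iff] at hv
  have := hv Finset.univ ![(c + d) - (a + b), a - c, b - d]
    (by simp [Fin.sum_univ_three]; ring) (by
      simp only [Fin.sum_univ_three]
      simp only [Matrix.cons_val]
      rw [← sub_eq_zero] at h
      rw [← h]; module)
  have h1 := this 1 (Finset.mem_univ _)
  have h2 := this 2 (Finset.mem_univ _)
  simp at h1 h2
  exact ⟨by linarith, by linarith⟩

theorem unique_level_through_interior_point
    (v : Fin 3 → EuclideanSpace ℝ (Fin 2))
    (hv : AffineIndependent ℝ v)
    (T : Set (EuclideanSpace ℝ (Fin 2)))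
    (hT : T = convexHull ℝ {v 0, v 1, v 2})
    (τ : EuclideanSpace ℝ (Fin 2) → ℝ)
    (hτc : ContinuousOn τ (frontier T))
    (h01 : τ (v 0) < τ (v 1)) (h12 : τ (v 1) < τ (v 2))
    (hmono : ∀ i j : Fin 3, i < j →
      StrictMonoOn (fun t : ℝ => τ ((1 - t) • v i + t • v j)) (Set.Icc 0 1) ∨
      StrictAntiOn (fun t : ℝ => τ ((1 - t) • v i + t • v j)) (Set.Icc 0 1)) :
    ∀ p ∈ T, ∃! t : ℝ, t ∈ Set.Icc (τ (v 0)) (τ (v 2)) ∧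
      p ∈ convexHull ℝ {x | x ∈ frontier T ∧ τ x = t} := by
  intro p hp
  have hF := frontier_tri v hv T hT
  have hu := coords_unique v hv
  have hF' : ∀ x, x ∈ frontier T ↔ ∃ s ∈ Set.Icc (0:ℝ) 1, x = (1 - s) • v 2 + s • v 0 ∨
      x = (1 - s) • v 2 + s • v 1 ∨ x = (1 - s) • v 1 + s • v 0 := by
    intro x
    rw [hF]
    constructor
    · rintro ⟨s, hs, h⟩
      refine ⟨1 - s, ⟨by linarith [hs.2], by linarith [hs.1]⟩, ?_⟩
      simp only [sub_sub_cancel]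
      rcases h with h | h | h
      · left; rw [h, add_comm]
      · right; right; rw [h, add_comm]
      · right; left; rw [h, add_comm]
    · rintro ⟨s, hs, h⟩
      refine ⟨1 - s, ⟨by linarith [hs.2], by linarith [hs.1]⟩, ?_⟩
      simp only [sub_sub_cancel]
      rcases h with h | h | h
      · left; rw [h, add_comm]
      · right; right; rw [h, add_comm]
      · right; left; rw [h, add_comm]
  have hu' : ∀ a b c d : ℝ,
      a • (v 1 - v 2) + b • (v 0 - v 2) = c • (v 1 - v 2) + d • (v 0 - v 2) →
      a = c ∧ b = d := by
    intro a b c d h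
    have := hu a (-a - b) c (-c - d) (by
      have e : ∀ a b : ℝ, a • (v 1 - v 0) + (-a - b) • (v 2 - v 0)
        = a • (v 1 - v 2) + b • (v 0 - v 2) := by intro a b; module
      rw [e, e, h])
    exact ⟨this.1, by linarith [this.1, this.2]⟩
  have hpath : ∀ x y : EuclideanSpace ℝ (Fin 2),
      (∀ s ∈ Set.Icc (0:ℝ) 1, (1 - s) • x + s • y ∈ frontier T) →
      ContinuousOn (fun t : ℝ => τ ((1 - t) • x + t • y)) (Set.Icc 0 1) := by
    intro x y h
    exact hτc.comp (by fun_prop) h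
  have c02 := hpath (v 0) (v 2) (fun s hs => (hF _).2 ⟨s, hs, Or.inl rfl⟩)
  have c01 := hpath (v 0) (v 1) (fun s hs => (hF _).2 ⟨s, hs, Or.inr (Or.inl rfl)⟩)
  have c20 : ContinuousOn (fun t : ℝ => -τ ((1 - t) • v 2 + t • v 0)) (Set.Icc 0 1) := (hpath (v 2) (v 0) (fun s hs => (hF' _).2 ⟨s, hs, Or.inl rfl⟩)).neg
  have c21 : ContinuousOn (fun t : ℝ => -τ ((1 - t) • v 2 + t • v 1)) (Set.Icc 0 1) := (hpath (v 2) (v 1) (fun s hs => (hF' _).2 ⟨s, hs, Or.inr (Or.inl rfl)⟩)).neg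
  have s02 := mono_of _ (by simpa using h01.trans h12) (hmono 0 2 (by decide))
  have s01 := mono_of _ (by simpa using h01) (hmono 0 1 (by decide))
  have s12 := mono_of _ (by simpa using h12) (hmono 1 2 (by decide))
  have s20 := rev_mono _ _ _ s02
  have s10 := rev_mono _ _ _ s01
  have s21 := rev_mono _ _ _ s12
  obtain ⟨p0, p1, p2, n0, n1, n2, hsum, rfl⟩ : ∃ p0 p1 p2 : ℝ, 0 ≤ p0 ∧ 0 ≤ p1 ∧ 0 ≤ p2 ∧
      p0 + p1 + p2 = 1 ∧ p = p0 • v 0 + p1 • v 1 + p2 • v 2 := by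
    rw [hT, convexHull_insert (by simp), convexHull_pair] at hp
    simp only [convexJoin_singleton_left, Set.mem_iUnion] at hp
    obtain ⟨q, hq, hp⟩ := hp
    obtain ⟨a, b, ha, hb, hab, rfl⟩ := hq
    obtain ⟨c, d, hc, hd, hcd, rfl⟩ := hp
    refine ⟨c, d * a, d * b, hc, by positivity, by positivity, ?_, ?_⟩
    · rw [add_assoc, ← mul_add, hab, mul_one, hcd]
    · module
  obtain ⟨α, hα, hαb⟩ : τ (v 1) ∈ (fun t : ℝ => τ ((1 - t) • v 0 + t • v 2)) '' Set.Icc 0 1 :=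
    intermediate_value_Icc zero_le_one c02 (by simpa using ⟨h01.le, h12.le⟩)
  have α0 : 0 < α := by
    rcases hα.1.eq_or_lt with h | h
    · subst h; simp at hαb; linarith
    · exact h
  have α1 : α < 1 := by
    rcases hα.2.eq_or_lt with h | h
    · subst h; simp at hαb; linarith
    · exact h
  have iffL := hull_iff_low (v 0) (v 1) (v 2) τ (frontier T) hF hu c02 c01 s02 s01 s12 h12.le
    p0 p1 p2 hsum
  have iffH := fun t => hull_iff_low (v 2) (v 1) (v 0) (fun x => -τ x) (frontier T) hF' hu'
    c20 c21 s20 s21 s10 (neg_le_neg h01.le) p2 p1 p0 (by linarith) (-t)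
  have eH : p2 • v 2 + p1 • v 1 + p0 • v 0 = p0 • v 0 + p1 • v 1 + p2 • v 2 := by module
  simp only [eH, neg_inj, Set.mem_Icc, neg_le_neg_iff] at iffH
  have bndL := fun t => low_bound (p1 := p1) (p2 := p2) (α := α) (t := t) s02 s01 ⟨α0, α1.le⟩
    (by simpa using hαb)
  have hαb' : -τ ((1 - (1 - α)) • v 2 + (1 - α) • v 0) = - τ (v 1) := by
    rw [← hαb, sub_sub_cancel, add_comm]
  have bndH := fun t => low_bound (p1 := p1) (p2 := p0) (α := 1 - α) (t := t) s20 s21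
    ⟨by linarith, by linarith⟩ (by simpa using hαb')
  have exL := low_exists (p1 := p1) (p2 := p2) c02 c01 s02 s01 (by simp) ⟨α0, α1.le⟩
    (by simpa using hαb) n1 n2 (by linarith)
  have exH := low_exists (p1 := p1) (p2 := p0) (α := 1 - α) c20 c21 s20 s21 (by simp)
    ⟨by linarith, by linarith⟩ (by simpa using hαb') n1 n0 (by linarith)
  simp only [sub_self, zero_smul, one_smul, zero_add, sub_zero, add_zero] at bndL bndH exL exH
  apply existsUnique_of_exists_of_unique
  · rcases le_total p2 (α * (1 - p1)) with h | h
    · obtain ⟨t, ht, hl⟩ := exL h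
      exact ⟨t, ⟨ht.1, ht.2.trans h12.le⟩, (iffL t ht).2 hl⟩
    · obtain ⟨t, ht, hl⟩ := exH (by nlinarith)
      obtain ⟨t, rfl⟩ : ∃ r, t = -r := ⟨-t, by ring⟩
      have ht1 := neg_le_neg_iff.1 ht.1
      have ht2 := neg_le_neg_iff.1 ht.2
      exact ⟨t, ⟨h01.le.trans ht2, ht1⟩, (iffH t ⟨ht1, ht2⟩).2 hl⟩
  · rintro t t' ⟨ht, hm⟩ ⟨ht', hm'⟩
    rcases le_total t (τ (v 1)) with h | h <;> rcases le_total t' (τ (v 1)) with h' | h'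
    · have a := (iffL t ⟨ht.1, h⟩).1 hm
      have a' := (iffL t' ⟨ht'.1, h'⟩).1 hm'
      exact le_antisymm (not_lt.1 (low_unique s02 s01 a' a)) (not_lt.1 (low_unique s02 s01 a a'))
    · have a := bndL _ ((iffL t ⟨ht.1, h⟩).1 hm)
      have a' := bndH _ ((iffH t' ⟨ht'.2, h'⟩).1 hm')
      have h1 := a.2 (by nlinarith [a.1, a'.1])
      have h2 := a'.2 (by nlinarith [a.1, a'.1])
      linarith
    · have a := bndL _ ((iffL t' ⟨ht'.1, h'⟩).1 hm')
      have a' := bndH _ ((iffH t ⟨ht.2, h⟩).1 hm)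
      have h1 := a.2 (by nlinarith [a.1, a'.1])
      have h2 := a'.2 (by nlinarith [a.1, a'.1])
      linarith
    · have a := (iffH t ⟨ht.2, h⟩).1 hm
      have a' := (iffH t' ⟨ht'.2, h'⟩).1 hm'
      have k1 := not_lt.1 (low_unique s20 s21 a' a)
      have k2 := not_lt.1 (low_unique s20 s21 a a')
      linarith
end

section
/- Let n ≥ 2, let p : Fin (n+1) → ℝⁿ be an affinely independent family of points, and let Δ be the convex hull of the range of p (an n-simplex). Let f : ℝⁿ → ℝ be an affine map such that the values f(p 0), …, f(p n) are pairwise distinct, and let c ∈ ℝ satisfy min_i f(p i) < c < max_i f(p i) and c ≠ f(p i) for all i. Then the set (frontier Δ) ∩ f⁻¹({c}) is homeomorphic to the sphere S^{n−2} (the unit sphere in ℝ^{n−1}). -/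
open Set Topology in
theorem exists_interior_level {E : Type*} [NormedAddCommGroup E] [NormedSpace ℝ E]
    (D : Set E) (hD : Convex ℝ D) (f : E →ᵃ[ℝ] ℝ) (c : ℝ) (m a : E)
    (hm : m ∈ interior D) (ha : a ∈ D) (h1 : f m < c) (h2 : c < f a) :
    ∃ q ∈ interior D, f q = c := by
  have hpos : 0 < f a - f m := by linarith
  refine ⟨AffineMap.lineMap m a ((c - f m) / (f a - f m)), ?_, ?_⟩
  · apply hD.openSegment_interior_self_subset_interior hm ha
    rw [openSegment_eq_image_lineMap]
    refine ⟨_, ⟨div_pos (by linarith) hpos, ?_⟩, rfl⟩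
    rw [div_lt_one hpos]; linarith
  · rw [AffineMap.apply_lineMap, AffineMap.lineMap_apply_ring']
    field_simp
    ring

theorem affine_level_set_on_simplex_boundary_is_sphere
    (n : ℕ) (hn : 2 ≤ n)
    (p : Fin (n + 1) → EuclideanSpace ℝ (Fin n))
    (hp : AffineIndependent ℝ p)
    (Δ : Set (EuclideanSpace ℝ (Fin n)))
    (hΔ : Δ = convexHull ℝ (Set.range p))
    (f : EuclideanSpace ℝ (Fin n) →ᵃ[ℝ] ℝ)
    (hdist : Function.Injective (fun i => f (p i)))
    (c : ℝ)
    (hc1 : ∃ i, f (p i) < c) (hc2 : ∃ i, c < f (p i))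
    (hc3 : ∀ i, c ≠ f (p i)) :
    Nonempty (↥(frontier Δ ∩ f ⁻¹' {c}) ≃ₜ
      Metric.sphere (0 : EuclideanSpace ℝ (Fin (n - 1))) 1) := by
  obtain ⟨i, hi⟩ := hc1
  obtain ⟨j, hj⟩ := hc2
  have hconv : Convex ℝ Δ := hΔ ▸ convex_convexHull ℝ _
  have hmem : ∀ k, p k ∈ Δ := fun k => hΔ ▸ subset_convexHull ℝ _ (Set.mem_range_self k)
  have hbdd : Bornology.IsBounded Δ := by
    rw [hΔ, isBounded_convexHull]
    exact (Set.finite_range p).isBounded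
  have hint : (interior Δ).Nonempty := by
    rw [hΔ, interior_convexHull_nonempty_iff_affineSpan_eq_top]
    rw [hp.affineSpan_eq_top_iff_card_eq_finrank_add_one]
    simp
  obtain ⟨q, hq, hfq⟩ : ∃ q ∈ interior Δ, f q = c := by
    obtain ⟨m, hm⟩ := hint
    rcases lt_trichotomy (f m) c with h | h | h
    · exact exists_interior_level Δ hconv f c m (p j) hm (hmem j) h hj
    · exact ⟨m, hm, h⟩
    · obtain ⟨q, hq, h'⟩ := exists_interior_level Δ hconv (-f) (-c) m (p i) hm (hmem i)
        (by simpa using h) (by simpa using hi)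
      exact ⟨q, hq, by simpa using h'⟩
  have hlin : f.linear ≠ 0 := by
    intro h
    have h1 := f.linearMap_vsub (p j) (p i)
    rw [h] at h1
    simp at h1
    linarith
  have hrank : Module.finrank ℝ (LinearMap.ker f.linear) = n - 1 := by
    have h1 := LinearMap.finrank_range_add_finrank_ker f.linear
    rw [LinearMap.range_eq_top.2 (LinearMap.surjective hlin)] at h1
    simp at h1
    omega
  let φ : EuclideanSpace ℝ (Fin (n - 1)) ≃ₗᵢ[ℝ] LinearMap.ker f.linear :=
    ((stdOrthonormalBasis ℝ (LinearMap.ker f.linear)).reindex (finCongr hrank)).repr.symm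
  let ψ : EuclideanSpace ℝ (Fin (n - 1)) →ₗᵢ[ℝ] EuclideanSpace ℝ (Fin n) :=
    (LinearMap.ker f.linear).subtypeₗᵢ.comp φ.toLinearIsometry
  let D : Set (EuclideanSpace ℝ (Fin n)) := (fun v => q + v) ⁻¹' Δ
  have hDconv : Convex ℝ D := hconv.translate_preimage_right q
  have hD0 : D ∈ nhds 0 := by
    apply (continuous_const.add continuous_id).continuousAt.preimage_mem_nhds
    simpa using mem_interior_iff_mem_nhds.1 hq
  have hDb : Bornology.IsBounded D := by
    obtain ⟨R, hR⟩ := hbdd.exists_norm_le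
    refine (isBounded_iff_forall_norm_le).2 ⟨R + ‖q‖, fun v hv => ?_⟩
    have h1 := hR _ hv
    have h2 := norm_sub_le (q + v) q
    simp at h2
    linarith
  have hDf : frontier D = (fun v => q + v) ⁻¹' frontier Δ :=
    ((Homeomorph.addLeft q).preimage_frontier Δ).symm
  let S : Set (EuclideanSpace ℝ (Fin (n - 1))) := ψ ⁻¹' D
  have hSconv : Convex ℝ S := hDconv.linear_preimage ψ.toLinearMap
  have hS0 : S ∈ nhds 0 := by
    apply ψ.continuous.continuousAt.preimage_mem_nhds
    simpa using hD0
  have hSb : Bornology.IsBounded S := by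
    obtain ⟨R, hR⟩ := hDb.exists_norm_le
    exact (isBounded_iff_forall_norm_le).2 ⟨R, fun v hv => by simpa using hR _ hv⟩
  have hg : ∀ x, gauge S x = gauge D (ψ x) := by
    intro x
    simp only [gauge_def', S, Set.mem_preimage, map_smul]
  have hSf : ∀ x, x ∈ frontier S ↔ q + ψ x ∈ frontier Δ := by
    intro x
    rw [← gauge_eq_one_iff_mem_frontier hSconv hS0, hg,
      gauge_eq_one_iff_mem_frontier hDconv hD0, hDf]
    rfl
  obtain ⟨h, -, -, hh⟩ := exists_homeomorph_image_interior_closure_frontier_eq_unitBall hSconv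
    ⟨0, mem_interior_iff_mem_nhds.2 hS0⟩ hSb
  have hker : ∀ x, f (q + x) = c ↔ x ∈ LinearMap.ker f.linear := by
    intro x
    have := f.map_vadd q x
    simp only [vadd_eq_add] at this
    rw [add_comm, this, LinearMap.mem_ker, hfq]
    simp
  let e : frontier S ≃ₜ ↥(frontier Δ ∩ f ⁻¹' {c}) :=
    { toFun := fun x => ⟨q + ψ x, (hSf x).1 x.2, (hker _).2 (φ x).2⟩
      invFun := fun y => ⟨φ.symm ⟨-q + y, (hker _).1 (by simpa using y.2.2)⟩, by
        rw [hSf]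
        simpa [ψ] using y.2.1⟩
      left_inv := fun x => by simp [ψ]
      right_inv := fun y => by simp [ψ]
      continuous_toFun := by fun_prop
      continuous_invFun := by
        refine Continuous.subtype_mk (φ.symm.continuous.comp (Continuous.subtype_mk ?_ _)) _
        fun_prop }
  exact ⟨e.symm.trans ((h.image (frontier S)).trans (Homeomorph.setCongr hh))⟩
end

section
/- There exists a sequence (f_i) of homeomorphisms of the closed interval [0,1], each fixing 0 and 1, such that: (i) no f_i is the identity map; (ii) any two of the f_i are topologically conjugate by an endpoint-fixing homeomorphism of [0,1]; and (iii) the sequence f_i converges uniformly to the identity map of [0,1]. -/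
noncomputable def FF (c p x : ℝ) : ℝ := c * x ^ p / ((1 - x) ^ p + c * x ^ p)

lemma FF_den {c p x : ℝ} (hc : 0 < c) (h0 : 0 ≤ x) (h1 : x ≤ 1) :
    0 < (1 - x) ^ p + c * x ^ p := by
  rcases h0.eq_or_lt with h | h
  · subst h
    have : 0 ≤ c * (0:ℝ) ^ p := by positivity
    have h2 : (1 - (0:ℝ)) ^ p = 1 := by simp
    linarith
  · have : 0 ≤ (1 - x) ^ p := Real.rpow_nonneg (by linarith) p
    have : 0 < c * x ^ p := by positivity
    linarith

lemma FF_mem {c p x : ℝ} (hc : 0 < c) (h0 : 0 ≤ x) (h1 : x ≤ 1) :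
    FF c p x ∈ Set.Icc (0:ℝ) 1 := by
  have hD := FF_den (p := p) hc h0 h1
  have : 0 ≤ (1 - x) ^ p := Real.rpow_nonneg (by linarith) p
  refine ⟨by unfold FF; positivity, ?_⟩
  unfold FF
  rw [div_le_one hD]
  linarith

lemma FF_comp {c p d q x : ℝ} (hc : 0 < c) (hd : 0 < d) (h0 : 0 ≤ x) (h1 : x ≤ 1) :
    FF d q (FF c p x) = FF (d * c ^ q) (p * q) x := by
  have hD := FF_den (p := p) hc h0 h1
  have hx : 0 ≤ 1 - x := by linarith
  have hp : 0 ≤ (1 - x) ^ p := Real.rpow_nonneg hx p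
  have e : 1 - FF c p x = (1 - x) ^ p / ((1 - x) ^ p + c * x ^ p) := by
    unfold FF; field_simp; ring
  have hE := FF_den (c := d * c ^ q) (p := p * q) (by positivity) h0 h1
  unfold FF at e
  unfold FF
  rw [e, Real.div_rpow (by positivity) hD.le, Real.div_rpow hp hD.le,
    Real.mul_rpow hc.le (by positivity), ← Real.rpow_mul h0, ← Real.rpow_mul hx]
  have hDq := Real.rpow_pos_of_pos hD q
  set D := ((1 - x) ^ p + c * x ^ p) ^ q
  have : (1 - x) ^ (p * q) / D + d * (c ^ q * x ^ (p * q) / D)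
    = ((1 - x) ^ (p * q) + d * c ^ q * x ^ (p * q)) / D := by ring
  rw [this]
  field_simp

lemma FF_id (x : ℝ) : FF 1 1 x = x := by simp [FF]

lemma FF_cont {c p : ℝ} (hc : 0 < c) (hp : 0 < p) :
    Continuous (fun x : unitInterval => FF c p x) := by
  unfold FF
  have h1 : Continuous (fun x : unitInterval => (x:ℝ) ^ p) :=
    continuous_subtype_val.rpow_const (fun _ => Or.inr hp.le)
  have h2 : Continuous (fun x : unitInterval => (1 - (x:ℝ)) ^ p) :=
    (continuous_const.sub continuous_subtype_val).rpow_const (fun _ => Or.inr hp.le)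
  exact (continuous_const.mul h1).div (h2.add (continuous_const.mul h1))
    (fun x => (FF_den hc x.2.1 x.2.2).ne')

noncomputable def FH (c p : ℝ) (hc : 0 < c) (hp : 0 < p) : unitInterval ≃ₜ unitInterval where
  toFun x := ⟨FF c p x, FF_mem hc x.2.1 x.2.2⟩
  invFun x := ⟨FF (c ^ (-p⁻¹)) p⁻¹ x, FF_mem (by positivity) x.2.1 x.2.2⟩
  left_inv x := by
    apply Subtype.ext
    change FF (c ^ (-p⁻¹)) p⁻¹ (FF c p x) = x
    rw [FF_comp hc (by positivity) x.2.1 x.2.2, ← Real.rpow_add hc, mul_inv_cancel₀ hp.ne']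
    simp [FF_id]
  right_inv x := by
    apply Subtype.ext
    change FF c p (FF (c ^ (-p⁻¹)) p⁻¹ x) = x
    rw [FF_comp (by positivity) hc x.2.1 x.2.2, ← Real.rpow_mul hc.le, inv_mul_cancel₀ hp.ne',
      neg_mul, inv_mul_cancel₀ hp.ne', Real.rpow_neg_one, mul_inv_cancel₀ hc.ne', FF_id]
  continuous_toFun := (FF_cont hc hp).subtype_mk _
  continuous_invFun := (FF_cont (by positivity) (by positivity)).subtype_mk _

lemma FH_coe (c p : ℝ) (hc : 0 < c) (hp : 0 < p) (x : unitInterval) :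
    (FH c p hc hp x : ℝ) = FF c p x := rfl

lemma FH_zero (c p : ℝ) (hc : 0 < c) (hp : 0 < p) : FH c p hc hp 0 = 0 := by
  apply Subtype.ext
  rw [FH_coe]; simp [FF, Real.zero_rpow hp.ne']

lemma FH_one (c p : ℝ) (hc : 0 < c) (hp : 0 < p) : FH c p hc hp 1 = 1 := by
  apply Subtype.ext
  rw [FH_coe]; simp [FF, Real.zero_rpow hp.ne', hc.ne']

lemma cpos (i : ℕ) : (0:ℝ) < 1 + 1 / ((i:ℝ) + 1) := by positivity

lemma cgt (i : ℕ) : (1:ℝ) < 1 + 1 / ((i:ℝ) + 1) := by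
  have : (0:ℝ) < 1 / ((i:ℝ) + 1) := by positivity
  linarith

lemma FH_conj {c d : ℝ} (hi : 1 < c) (hj : 1 < d) (ki : 0 < c) (kj : 0 < d) :
    ∃ h : unitInterval ≃ₜ unitInterval, h 0 = 0 ∧ h 1 = 1 ∧
        ∀ x, h (FH c 1 ki one_pos x) = FH d 1 kj one_pos (h x) := by
  have li := Real.log_pos hi
  have lj := Real.log_pos hj
  have hp : 0 < Real.log d / Real.log c := by positivity
  refine ⟨FH 1 (Real.log d / Real.log c) one_pos hp, FH_zero _ _ _ _, FH_one _ _ _ _, ?_⟩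
  intro x
  apply Subtype.ext
  simp only [FH_coe]
  rw [FF_comp ki one_pos x.2.1 x.2.2, FF_comp one_pos kj x.2.1 x.2.2]
  have : c ^ (Real.log d / Real.log c) = d := by
    rw [Real.rpow_def_of_pos ki, mul_div_cancel₀ _ li.ne', Real.exp_log kj]
  rw [this]
  simp

theorem exists_conjugate_homeos_converging_to_id :
    ∃ f : ℕ → (unitInterval ≃ₜ unitInterval),
      (∀ i, f i 0 = 0 ∧ f i 1 = 1) ∧
      (∀ i, ⇑(f i) ≠ id) ∧
      (∀ i j, ∃ h : unitInterval ≃ₜ unitInterval, h 0 = 0 ∧ h 1 = 1 ∧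
        ∀ x, h (f i x) = f j (h x)) ∧
      TendstoUniformly (fun i => ⇑(f i)) id Filter.atTop := by
  refine ⟨fun i => FH (1 + 1 / ((i:ℝ) + 1)) 1 (cpos i) one_pos,
    fun i => ⟨FH_zero _ _ _ _, FH_one _ _ _ _⟩, ?_, ?_, ?_⟩
  · intro i h
    have h1 := congrArg Subtype.val (congrFun h ⟨1/2, by norm_num, by norm_num⟩)
    rw [FH_coe] at h1
    have hc := cgt i
    generalize 1 + 1 / ((i:ℝ) + 1) = c at *
    simp only [FF, Real.rpow_one, id] at h1
    rw [div_eq_iff (by linarith)] at h1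
    linarith
  · intro i j
    exact FH_conj (cgt i) (cgt j) (cpos i) (cpos j)
  · rw [Metric.tendstoUniformly_iff]
    intro ε hε
    obtain ⟨N, hN⟩ := exists_nat_one_div_lt hε
    filter_upwards [Filter.eventually_ge_atTop N] with i hi x
    have hlt : 1 / ((i:ℝ) + 1) < ε := lt_of_le_of_lt (Nat.one_div_le_one_div hi) hN
    refine lt_of_le_of_lt ?_ hlt
    rw [Subtype.dist_eq, FH_coe, Real.dist_eq]
    have ht : (0:ℝ) < 1 / ((i:ℝ) + 1) := by positivity
    generalize 1 / ((i:ℝ) + 1) = t at *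
    have h0 := x.2.1
    have h1 := x.2.2
    simp only [FF, Real.rpow_one, id]
    generalize (x:ℝ) = y at *
    have hy : 0 ≤ t * y := by positivity
    have hD : 0 < 1 - y + (1 + t) * y := by nlinarith
    have e : y - (1 + t) * y / (1 - y + (1 + t) * y)
        = -(t * (y * (1 - y)) / (1 - y + (1 + t) * y)) := by
      have hD' := hD.ne'
      rw [eq_neg_iff_add_eq_zero, sub_add_eq_add_sub, add_sub_assoc, ← sub_div, ← eq_neg_iff_add_eq_zero, ← neg_div, eq_div_iff hD']
      ring
    have hyy : 0 ≤ y * (1 - y) := mul_nonneg h0 (by linarith)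
    rw [e, abs_neg, abs_of_nonneg (by positivity), div_le_iff₀ hD]
    apply mul_le_mul_of_nonneg_left _ ht.le
    nlinarith
end

section
/- Let B denote the closed unit ball in ℝ³, with open interior int(B) and boundary sphere S² = ∂B. Let λ ⊆ int(B) be a subset which is closed in the subspace topology of int(B) and such that int(B) \ λ has exactly two connected components. Let L = closure(λ) ∩ S² (the closure taken in ℝ³), and let D be a connected component of S² \ L. Then for any points p, q ∈ D and any sequences (p_i), (q_i) of points of int(B) \ λ with p_i → p and q_i → q, there exists N such that for all i ≥ N the points p_i and q_i lie in the same connected component of int(B) \ λ. -/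
theorem complementary_region_determines_side
    (lam : Set (EuclideanSpace ℝ (Fin 3)))
    (hsub : lam ⊆ Metric.ball (0 : EuclideanSpace ℝ (Fin 3)) 1)
    (hclosed : IsClosed
      (Subtype.val ⁻¹' lam : Set (Metric.ball (0 : EuclideanSpace ℝ (Fin 3)) 1)))
    (hcomp : Nat.card (ConnectedComponents
      ↥(Metric.ball (0 : EuclideanSpace ℝ (Fin 3)) 1 \ lam)) = 2)
    (L : Set (EuclideanSpace ℝ (Fin 3)))
    (hL : L = closure lam ∩ Metric.sphere (0 : EuclideanSpace ℝ (Fin 3)) 1)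
    (D : Set (EuclideanSpace ℝ (Fin 3)))
    (hD : ∃ x ∈ Metric.sphere (0 : EuclideanSpace ℝ (Fin 3)) 1 \ L,
      D = connectedComponentIn (Metric.sphere (0 : EuclideanSpace ℝ (Fin 3)) 1 \ L) x)
    (p q : EuclideanSpace ℝ (Fin 3)) (hp : p ∈ D) (hq : q ∈ D)
    (ps qs : ℕ → EuclideanSpace ℝ (Fin 3))
    (hps : ∀ i, ps i ∈ Metric.ball (0 : EuclideanSpace ℝ (Fin 3)) 1 \ lam)
    (hqs : ∀ i, qs i ∈ Metric.ball (0 : EuclideanSpace ℝ (Fin 3)) 1 \ lam)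
    (hp' : Filter.Tendsto ps Filter.atTop (nhds p))
    (hq' : Filter.Tendsto qs Filter.atTop (nhds q)) :
    ∃ N : ℕ, ∀ i ≥ N, qs i ∈ connectedComponentIn
      (Metric.ball (0 : EuclideanSpace ℝ (Fin 3)) 1 \ lam) (ps i) := by
  classical
  set Bl := Metric.ball (0 : EuclideanSpace ℝ (Fin 3)) 1 with hBl
  -- locally near a point of `D`, everything is in one component
  have hDs : D ⊆ Metric.sphere (0 : EuclideanSpace ℝ (Fin 3)) 1 \ L := by
    obtain ⟨x, hx, rfl⟩ := hD
    exact connectedComponentIn_subset _ _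
  have hDc : IsPreconnected D := by
    obtain ⟨x, hx, rfl⟩ := hD
    exact isPreconnected_connectedComponentIn
  have hloc : ∀ d ∈ D, ∃ ε > 0, Metric.ball d ε ∩ Bl ⊆ Bl \ lam := by
    intro d hd
    have h1 := hDs hd
    have h2 : d ∉ closure lam := fun h => h1.2 (hL ▸ ⟨h, h1.1⟩)
    have h3 : (closure lam)ᶜ ∈ nhds d := isClosed_closure.isOpen_compl.mem_nhds h2
    obtain ⟨ε, hε, h⟩ := Metric.mem_nhds_iff.1 h3
    exact ⟨ε, hε, fun x hx => ⟨hx.2, fun hl => h hx.1 (subset_closure hl)⟩⟩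
  have hne : ∀ d ∈ D, (nhdsWithin d Bl).NeBot := by
    intro d hd
    rw [← mem_closure_iff_nhdsWithin_neBot, hBl, closure_ball _ one_ne_zero]
    exact Metric.sphere_subset_closedBall (hDs hd).1
  have hpre : ∀ (d : EuclideanSpace ℝ (Fin 3)) (ε : ℝ), IsPreconnected (Metric.ball d ε ∩ Bl) :=
    fun d ε => ((convex_ball d ε).inter (convex_ball _ _)).isPreconnected
  have hmem : ∀ (d : EuclideanSpace ℝ (Fin 3)) (ε : ℝ), 0 < ε →
      Metric.ball d ε ∩ Bl ∈ nhdsWithin d Bl := fun d ε hε =>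
    Filter.inter_mem (mem_nhdsWithin_of_mem_nhds (Metric.ball_mem_nhds d hε)) self_mem_nhdsWithin
  obtain ⟨ε, hε, hεs⟩ := hloc p hp
  have := hne p hp
  obtain ⟨x0, hx0⟩ := Filter.nonempty_of_mem (hmem p ε hε)
  set C := connectedComponentIn (Bl \ lam) x0 with hC
  have hopen : ∀ P : EuclideanSpace ℝ (Fin 3) → Prop,
      IsOpen {d | ∀ᶠ x in nhdsWithin d Bl, P x} := by
    intro P
    simp only [eventually_nhdsWithin_iff]
    exact isOpen_setOfPred_eventually_nhds
  have hpA : ∀ᶠ x in nhdsWithin p Bl, x ∈ C := by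
    filter_upwards [hmem p ε hε] with x hx
    exact (hpre p ε).subset_connectedComponentIn hx0 hεs hx
  have hcov : ∀ d ∈ D, (∀ᶠ x in nhdsWithin d Bl, x ∈ C) ∨ (∀ᶠ x in nhdsWithin d Bl, x ∉ C) := by
    intro d hd
    obtain ⟨δ, hδ, hδs⟩ := hloc d hd
    by_cases h : ∃ y ∈ Metric.ball d δ ∩ Bl, y ∈ C
    · obtain ⟨y, hy, hyC⟩ := h
      left
      filter_upwards [hmem d δ hδ] with x hx
      rw [hC, connectedComponentIn_eq hyC]
      exact (hpre d δ).subset_connectedComponentIn hy hδs hx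
    · right
      filter_upwards [hmem d δ hδ] with x hx hxC
      exact h ⟨x, hx, hxC⟩
  have hqA : ∀ᶠ x in nhdsWithin q Bl, x ∈ C := by
    by_contra hcon
    have hqB := (hcov q hq).resolve_left hcon
    obtain ⟨d, hd, hdA, hdB⟩ := hDc _ _ (hopen (fun x => x ∈ C)) (hopen (fun x => x ∉ C))
      (fun d hd => hcov d hd) ⟨p, hp, hpA⟩ ⟨q, hq, hqB⟩
    have := hne d hd
    rw [Set.mem_setOf_eq] at hdA hdB
    obtain ⟨x, hx1, hx2⟩ := (Filter.Eventually.and hdA hdB).exists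
    exact hx2 hx1
  have e1 := (tendsto_nhdsWithin_iff.2 ⟨hp', Filter.Eventually.of_forall fun i => (hps i).1⟩).eventually hpA
  have e2 := (tendsto_nhdsWithin_iff.2 ⟨hq', Filter.Eventually.of_forall fun i => (hqs i).1⟩).eventually hqA
  obtain ⟨N, hN⟩ := Filter.eventually_atTop.1 (e1.and e2)
  refine ⟨N, fun i hi => ?_⟩
  rw [← connectedComponentIn_eq (hN i hi).1]
  exact (hN i hi).2
end
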